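/- Let H be a Hopf algebra with invertible antipode, C a right H-module coalgebra, and f: C → H a total cointegral which is a coalgebra map (with convolution inverse f^{-1} = S∘f). Then C^D, with its original right H-action and the left H-coaction c ↦ f^{-1}(c(3)) f(c(1)) ⊗ c(2), is a right-left anti Yetter–Drinfeld module over H. Moreover, if c(2)·(f^{-1}(c(3)) f(c(1))) = c for all c ∈ C^D, then this module is stable. -/

import Mathlib

open TensorProduct LinearMap

noncomputable section

variable {k H C M : Type*} [Field k] [Ring H] [HopfAlgebra k H]
  [AddCommGroup C] [Module k C] [Coalgebra k C] [AddCommGroup M] [Module k M]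

local notation "Δ" => (Coalgebra.comul (R := k) (A := H))
local notation "εH" => (Coalgebra.counit (R := k) (A := H))
local notation "𝒮" => (HopfAlgebra.antipode (R := k) (A := H))
local notation "mulH" => (LinearMap.mul' k H)
local notation "ΔC" => (Coalgebra.comul (R := k) (A := C))
local notation "εC" => (Coalgebra.counit (R := k) (A := C))

/-- Right-hand side of the right-right (anti) Yetter-Drinfeld compatibility:
`m ⊗ h ↦ act (m₍₀₎ ⊗ h⑵) ⊗ s h⑴ * m₍₁₎ * h⑶`, where the comultiplication of `H` is `Dh`,
its multiplication is `mH` and `s` plays the role of the (inverse of the) antipode. -/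
def ydRhs (mH : H ⊗[k] H →ₗ[k] H) (Dh : H →ₗ[k] H ⊗[k] H) (s : H →ₗ[k] H)
    (act : M ⊗[k] H →ₗ[k] M) (ρM : M →ₗ[k] M ⊗[k] H) : M ⊗[k] H →ₗ[k] M ⊗[k] H :=
  lTensor M (mH ∘ₗ TensorProduct.map s mH) ∘ₗ
  (TensorProduct.assoc k M H (H ⊗[k] H)).toLinearMap ∘ₗ
  rTensor (H ⊗[k] H) (rTensor H act ∘ₗ (TensorProduct.assoc k M H H).symm.toLinearMap ∘ₗ
      lTensor M (TensorProduct.comm k H H).toLinearMap) ∘ₗ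
  (tensorTensorTensorComm k M H (H ⊗[k] H) H).toLinearMap ∘ₗ
  TensorProduct.map ρM (rTensor H Dh ∘ₗ Dh)

/-- Right-hand side of the left-right anti-Yetter-Drinfeld compatibility:
`h ⊗ m ↦ act (h⑵ ⊗ m₍₀₎) ⊗ h⑶ * m₍₁₎ * s h⑴`. -/
def aydLRRhs (mH : H ⊗[k] H →ₗ[k] H) (Dh : H →ₗ[k] H ⊗[k] H) (s : H →ₗ[k] H)
    (act : H ⊗[k] M →ₗ[k] M) (ρM : M →ₗ[k] M ⊗[k] H) : H ⊗[k] M →ₗ[k] M ⊗[k] H :=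
  TensorProduct.map act
      (mH ∘ₗ lTensor H mH ∘ₗ lTensor H (lTensor H s) ∘ₗ
        lTensor H (TensorProduct.comm k H H).toLinearMap ∘ₗ
        (TensorProduct.assoc k H H H).toLinearMap) ∘ₗ
  (tensorTensorTensorComm k H (H ⊗[k] H) M H).toLinearMap ∘ₗ
  TensorProduct.map
    ((TensorProduct.assoc k H H H).toLinearMap ∘ₗ
      (TensorProduct.comm k H (H ⊗[k] H)).toLinearMap ∘ₗ lTensor H Dh ∘ₗ Dh) ρM

/-- Right-hand side of the right-left anti-Yetter-Drinfeld compatibility: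
`m ⊗ h ↦ s h⑶ * m₍₋₁₎ * h⑴ ⊗ act (m₍₀₎ ⊗ h⑵)`. -/
def aydRLRhs (mH : H ⊗[k] H →ₗ[k] H) (Dh : H →ₗ[k] H ⊗[k] H) (s : H →ₗ[k] H)
    (act : M ⊗[k] H →ₗ[k] M) (lρ : M →ₗ[k] H ⊗[k] M) : M ⊗[k] H →ₗ[k] H ⊗[k] M :=
  rTensor M (mH ∘ₗ (TensorProduct.comm k H H).toLinearMap ∘ₗ lTensor H s) ∘ₗ
  (TensorProduct.assoc k H H M).symm.toLinearMap ∘ₗ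
  lTensor H (TensorProduct.comm k M H).toLinearMap ∘ₗ
  TensorProduct.map mH (rTensor H act ∘ₗ (TensorProduct.assoc k M H H).symm.toLinearMap) ∘ₗ
  (tensorTensorTensorComm k H M H (H ⊗[k] H)).toLinearMap ∘ₗ
  TensorProduct.map lρ (lTensor H Dh ∘ₗ Dh)

/-- The right `H`-coaction `c ↦ c⑵ ⊗ g c⑴ * f c⑶` attached to a total cointegral `f` with
convolution inverse `g`. -/
def coactInt (f g : C →ₗ[k] H) : C →ₗ[k] C ⊗[k] H :=
  lTensor C (mulH ∘ₗ TensorProduct.map g f) ∘ₗ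
    lTensor C (TensorProduct.comm k C C).toLinearMap ∘ₗ
    (TensorProduct.assoc k C C C).toLinearMap ∘ₗ
    (TensorProduct.comm k C (C ⊗[k] C)).toLinearMap ∘ₗ lTensor C ΔC ∘ₗ ΔC

/-- The left `H`-coaction `c ↦ g c⑶ * f c⑴ ⊗ c⑵`. -/
def lcoactA (f g : C →ₗ[k] H) : C →ₗ[k] H ⊗[k] C :=
  rTensor C (mulH ∘ₗ TensorProduct.map g f) ∘ₗ
    rTensor C (TensorProduct.comm k C C).toLinearMap ∘ₗ
    (TensorProduct.assoc k C C C).symm.toLinearMap ∘ₗ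
    lTensor C (TensorProduct.comm k C C).toLinearMap ∘ₗ lTensor C ΔC ∘ₗ ΔC

/-- The left `H`-coaction `c ↦ g c⑴ * f c⑶ ⊗ c⑵`. -/
def lcoactB (f g : C →ₗ[k] H) : C →ₗ[k] H ⊗[k] C :=
  rTensor C (mulH ∘ₗ TensorProduct.map g f) ∘ₗ
    (TensorProduct.assoc k C C C).symm.toLinearMap ∘ₗ
    lTensor C (TensorProduct.comm k C C).toLinearMap ∘ₗ lTensor C ΔC ∘ₗ ΔC

/-- The coideal `I = span {c·h - ε(h) c}`, so that `D = C ⧸ modIdeal γ`. -/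
def modIdeal (γ : C ⊗[k] H →ₗ[k] C) : Submodule k C :=
  Submodule.span k {x : C | ∃ c h, x = γ (c ⊗ₜ[k] h) - εH h • c}

/-- The subspace `C^D = {c | c⑴ φ(π c⑵) = c⑵ φ(π c⑴) for all φ ∈ D*}`. -/
def cdSub (γ : C ⊗[k] H →ₗ[k] C) : Submodule k C :=
  ⨅ φ : (C ⧸ modIdeal γ) →ₗ[k] k,
    LinearMap.ker
      ((TensorProduct.rid k C).toLinearMap ∘ₗ lTensor C (φ ∘ₗ (modIdeal γ).mkQ) ∘ₗ ΔC -
        (TensorProduct.lid k C).toLinearMap ∘ₗ rTensor C (φ ∘ₗ (modIdeal γ).mkQ) ∘ₗ ΔC)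

/-- The canonical map `C ⊗ H → C ⊗ C`, `c ⊗ h ↦ c⑴ ⊗ c⑵ · h`, of a Hopf Galois coextension. -/
def canMapC (γ : C ⊗[k] H →ₗ[k] C) : C ⊗[k] H →ₗ[k] C ⊗[k] C :=
  lTensor C γ ∘ₗ (TensorProduct.assoc k C C H).toLinearMap ∘ₗ rTensor H ΔC

/-- The cotensor product `C □_D C` as a subspace of `C ⊗ C`. -/
def cotensorC (γ : C ⊗[k] H →ₗ[k] C) : Submodule k (C ⊗[k] C) :=
  LinearMap.ker
    ((TensorProduct.assoc k C (C ⧸ modIdeal γ) C).toLinearMap ∘ₗ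
        rTensor C (lTensor C (modIdeal γ).mkQ ∘ₗ ΔC) -
      lTensor C (rTensor C (modIdeal γ).mkQ ∘ₗ ΔC))

/-- `c ⊗ c' ↦ c⑴ ⊗ fInv c⑵ * f c'`, the candidate for `can⁻¹`. -/
def psiMap (f fInv : C →ₗ[k] H) : C ⊗[k] C →ₗ[k] C ⊗[k] H :=
  lTensor C (mulH ∘ₗ TensorProduct.map fInv f) ∘ₗ
    (TensorProduct.assoc k C C C).toLinearMap ∘ₗ rTensor C ΔC

/-- `κ = (ε ⊗ id) ∘ can⁻¹`, built from a chosen section `inv` of the canonical map. -/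
def kappaOf (inv : C ⊗[k] C →ₗ[k] C ⊗[k] H) : C ⊗[k] C →ₗ[k] H :=
  (TensorProduct.lid k H).toLinearMap ∘ₗ rTensor H εC ∘ₗ inv

/-- The coaction `c ↦ c⑵ ⊗ κ (c⑴ ⊗ c⑶)`. -/
def coactKappa (inv : C ⊗[k] C →ₗ[k] C ⊗[k] H) : C →ₗ[k] C ⊗[k] H :=
  lTensor C (kappaOf inv) ∘ₗ (TensorProduct.assoc k C C C).toLinearMap ∘ₗ
    rTensor C (TensorProduct.comm k C C).toLinearMap ∘ₗ
    (TensorProduct.assoc k C C C).symm.toLinearMap ∘ₗ lTensor C ΔC ∘ₗ ΔC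

/-- `δ(h⑴) • s h⑵`, the twisted antipode. -/
def twistS (δl : H →ₗ[k] k) (s : H →ₗ[k] H) (Dh : H →ₗ[k] H ⊗[k] H) : H →ₗ[k] H :=
  (TensorProduct.lid k H).toLinearMap ∘ₗ TensorProduct.map δl s ∘ₗ Dh

section Helpers

variable {A X Y Z X2 Y2 : Type*} [AddCommMonoid A] [Module k A] [Coalgebra k A]
  [AddCommMonoid X] [Module k X] [AddCommMonoid Y] [Module k Y] [AddCommMonoid Z] [Module k Z]
  [AddCommMonoid X2] [Module k X2] [AddCommMonoid Y2] [Module k Y2]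

/-- `st P Q : a ↦ P a⑴ ⊗ Q a⑵`. -/
def st (P : A →ₗ[k] X) (Q : A →ₗ[k] Y) : A →ₗ[k] X ⊗[k] Y :=
  TensorProduct.map P Q ∘ₗ Coalgebra.comul

theorem st_id_id : st (LinearMap.id : A →ₗ[k] A) LinearMap.id = Coalgebra.comul := by
  simp [st]

theorem map_st (u : X →ₗ[k] X2) (v : Y →ₗ[k] Y2) (P : A →ₗ[k] X) (Q : A →ₗ[k] Y) :
    TensorProduct.map u v ∘ₗ st P Q = st (u ∘ₗ P) (v ∘ₗ Q) := by
  simp [st, TensorProduct.map_comp, LinearMap.comp_assoc]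

theorem assoc_st (P : A →ₗ[k] X) (Q : A →ₗ[k] Y) (T : A →ₗ[k] Z) :
    (TensorProduct.assoc k X Y Z).toLinearMap ∘ₗ st (st P Q) T = st P (st Q T) := by
  have h1 : st (st P Q) T = TensorProduct.map (TensorProduct.map P Q) T ∘ₗ
      rTensor A Coalgebra.comul ∘ₗ Coalgebra.comul := by
    rw [← LinearMap.comp_assoc, LinearMap.rTensor_def, ← TensorProduct.map_comp]; rfl
  have h2 : st P (st Q T) = TensorProduct.map P (TensorProduct.map Q T) ∘ₗ
      lTensor A Coalgebra.comul ∘ₗ Coalgebra.comul := by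
    rw [← LinearMap.comp_assoc, LinearMap.lTensor_def, ← TensorProduct.map_comp]; rfl
  rw [h1, h2, ← Coalgebra.coassoc, ← LinearMap.comp_assoc, ← LinearMap.comp_assoc,
    ← TensorProduct.map_map_comp_assoc_eq]
  simp only [LinearMap.comp_assoc]

theorem st_st (P : A →ₗ[k] X) (Q : A →ₗ[k] Y) (T : A →ₗ[k] Z) :
    st (st P Q) T = (TensorProduct.assoc k X Y Z).symm.toLinearMap ∘ₗ st P (st Q T) := by
  rw [← assoc_st, ← LinearMap.comp_assoc]; simp

theorem st_comp_right (v : Y →ₗ[k] Y2) (P : A →ₗ[k] X) (Q : A →ₗ[k] Y) :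
    st P (v ∘ₗ Q) = lTensor X v ∘ₗ st P Q := by
  rw [LinearMap.lTensor_def, map_st]; rfl

theorem st_comp_left (u : X →ₗ[k] X2) (P : A →ₗ[k] X) (Q : A →ₗ[k] Y) :
    st (u ∘ₗ P) Q = rTensor Y u ∘ₗ st P Q := by
  rw [LinearMap.rTensor_def, map_st]; rfl

theorem st_counit_left (Q : A →ₗ[k] Y) :
    st (Coalgebra.counit) Q = (TensorProduct.lid k Y).symm.toLinearMap ∘ₗ Q := by
  have : st (Coalgebra.counit) Q = lTensor k Q ∘ₗ rTensor A Coalgebra.counit ∘ₗ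
      (Coalgebra.comul (R := k) (A := A)) := by
    rw [← LinearMap.comp_assoc, LinearMap.lTensor_comp_rTensor]; rfl
  rw [this, Coalgebra.rTensor_counit_comp_comul]; ext; simp

theorem st_counit_right (P : A →ₗ[k] X) :
    st P (Coalgebra.counit) = (TensorProduct.rid k X).symm.toLinearMap ∘ₗ P := by
  have : st P (Coalgebra.counit) = rTensor k P ∘ₗ lTensor A Coalgebra.counit ∘ₗ
      (Coalgebra.comul (R := k) (A := A)) := by
    rw [← LinearMap.comp_assoc, LinearMap.rTensor_comp_lTensor]; rfl
  rw [this, Coalgebra.lTensor_counit_comp_comul]; ext; simp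

/-- `a ⊗ b ↦ S a * b`. -/
def muL : H ⊗[k] H →ₗ[k] H := mulH ∘ₗ rTensor H 𝒮

/-- `a ⊗ b ↦ a * S b`. -/
def muR : H ⊗[k] H →ₗ[k] H := mulH ∘ₗ lTensor H 𝒮

@[simp] theorem muL_tmul (a b : H) : muL (k := k) (a ⊗ₜ b) = 𝒮 a * b := rfl
@[simp] theorem muR_tmul (a b : H) : muR (k := k) (a ⊗ₜ b) = a * 𝒮 b := rfl

theorem muL_comul : muL ∘ₗ Δ = Algebra.linearMap k H ∘ₗ εH := by
  rw [muL, LinearMap.comp_assoc]; exact HopfAlgebra.mul_antipode_rTensor_comul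

theorem muR_comul : muR ∘ₗ Δ = Algebra.linearMap k H ∘ₗ εH := by
  rw [muR, LinearMap.comp_assoc]; exact HopfAlgebra.mul_antipode_lTensor_comul

/-- Cancellation `S f a⑴ * f a⑵ ⊗ W a⑶ = 1 ⊗ W a`. -/
theorem cancelL (f : A →ₗ[k] H) (hc : εH ∘ₗ f = Coalgebra.counit) (hm : Δ ∘ₗ f = st f f)
    (W : A →ₗ[k] Y) :
    (rTensor Y muL ∘ₗ (TensorProduct.assoc k H H Y).symm.toLinearMap) ∘ₗ st f (st f W) =
      TensorProduct.mk k H Y 1 ∘ₗ W := by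
  rw [LinearMap.comp_assoc, ← st_st, ← st_comp_left, ← hm, ← LinearMap.comp_assoc, muL_comul, LinearMap.comp_assoc, hc,
    st_comp_left, st_counit_left]
  ext; simp

/-- Cancellation `f a⑴ * S f a⑵ ⊗ W a⑶ = 1 ⊗ W a`. -/
theorem cancelR (f : A →ₗ[k] H) (hc : εH ∘ₗ f = Coalgebra.counit) (hm : Δ ∘ₗ f = st f f)
    (W : A →ₗ[k] Y) :
    (rTensor Y muR ∘ₗ (TensorProduct.assoc k H H Y).symm.toLinearMap) ∘ₗ st f (st f W) =
      TensorProduct.mk k H Y 1 ∘ₗ W := by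
  rw [LinearMap.comp_assoc, ← st_st, ← st_comp_left, ← hm, ← LinearMap.comp_assoc, muR_comul, LinearMap.comp_assoc, hc,
    st_comp_left, st_counit_left]
  ext; simp

theorem comul_antipode' : Δ ∘ₗ 𝒮 = TensorProduct.map 𝒮 𝒮 ∘ₗ
    (TensorProduct.comm k H H).toLinearMap ∘ₗ Δ := by
  have h1 : WithConv.toConv (TensorProduct.map 𝒮 𝒮 ∘ₗ
    (TensorProduct.comm k H H).toLinearMap ∘ₗ Δ) * WithConv.toConv Δ = 1 := by
    apply WithConv.ext
    simp only [LinearMap.convMul_def, LinearMap.convOne_def, WithConv.ofConv_toConv]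
    change LinearMap.mul' k (H ⊗[k] H) ∘ₗ st _ _ = _
    have key := cancelL (k := k) (H := H) (A := H) LinearMap.id rfl
      (by rw [st_id_id]; rfl) LinearMap.id
    set i : H →ₗ[k] H := LinearMap.id with hi
    have e : (Δ : H →ₗ[k] H ⊗[k] H) = st i i := st_id_id.symm
    have e2 : LinearMap.mul' k (H ⊗[k] H) ∘ₗ st (TensorProduct.map 𝒮 𝒮 ∘ₗ
        (TensorProduct.comm k H H).toLinearMap ∘ₗ Δ) Δ =
        ((TensorProduct.comm k H H).toLinearMap ∘ₗ rTensor H muL ∘ₗ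
          (TensorProduct.assoc k H H H).symm.toLinearMap ∘ₗ
          lTensor H (TensorProduct.comm k H H).toLinearMap) ∘ₗ
        lTensor H (rTensor H muL ∘ₗ (TensorProduct.assoc k H H H).symm.toLinearMap) ∘ₗ
        st i (st i (st i i)) := by
      rw [e, ← LinearMap.comp_assoc, st_comp_left, st_st]
      simp only [← LinearMap.comp_assoc]
      congr 1
      ext a b c d
      simp
    rw [e2, ← st_comp_right, key, st_comp_right, ← LinearMap.comp_assoc]
    have e3 : (((TensorProduct.comm k H H).toLinearMap ∘ₗ rTensor H muL ∘ₗ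
          (TensorProduct.assoc k H H H).symm.toLinearMap ∘ₗ
          lTensor H (TensorProduct.comm k H H).toLinearMap) ∘ₗ
          lTensor H (TensorProduct.mk k H H 1)) = TensorProduct.mk k H H 1 ∘ₗ muL := by
      ext a b; simp
    rw [e3, ← e, LinearMap.comp_assoc, muL_comul]
    ext a
    simp [Algebra.algebraMap_eq_smul_one, Algebra.TensorProduct.one_def]
  exact (WithConv.toConv_injective (left_inv_eq_right_inv h1 LinearMap.comul_right_inv)).symm


/-- `h ⊗ (c ⊗ g) ↦ S g * h ⊗ c`. -/
def Qmap : H ⊗[k] (X ⊗[k] H) →ₗ[k] H ⊗[k] X :=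
  rTensor X (muL ∘ₗ (TensorProduct.comm k H H).toLinearMap) ∘ₗ
    (TensorProduct.assoc k H H X).symm.toLinearMap ∘ₗ
    lTensor H (TensorProduct.comm k X H).toLinearMap

/-- `h ⊗ (c ⊗ g) ↦ h * S g ⊗ c`. -/
def Qmap2 : H ⊗[k] (X ⊗[k] H) →ₗ[k] H ⊗[k] X :=
  rTensor X muR ∘ₗ
    (TensorProduct.assoc k H H X).symm.toLinearMap ∘ₗ
    lTensor H (TensorProduct.comm k X H).toLinearMap

@[simp] theorem Qmap_tmul (a b : H) (x : X) :
    Qmap (k := k) (a ⊗ₜ (x ⊗ₜ b)) = (𝒮 b * a) ⊗ₜ x := by simp [Qmap]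

@[simp] theorem Qmap2_tmul (a b : H) (x : X) :
    Qmap2 (k := k) (a ⊗ₜ (x ⊗ₜ b)) = (a * 𝒮 b) ⊗ₜ x := by simp [Qmap2]

theorem Qmap_nat (u : X →ₗ[k] Y) :
    lTensor H u ∘ₗ Qmap = Qmap ∘ₗ lTensor H (rTensor H u) := by
  ext a x b; simp

theorem lcoactA_eq (f : C →ₗ[k] H) :
    lcoactA f (𝒮 ∘ₗ f) = Qmap ∘ₗ st f (st LinearMap.id f) := by
  have h : st f (st LinearMap.id f) = TensorProduct.map f (TensorProduct.map LinearMap.id f) ∘ₗ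
      lTensor C ΔC ∘ₗ ΔC := by
    rw [← LinearMap.comp_assoc, LinearMap.lTensor_def, ← TensorProduct.map_comp]; rfl
  rw [h, lcoactA]
  simp only [← LinearMap.comp_assoc]
  congr 2
  ext a b c
  simp

theorem counit_part (f : C →ₗ[k] H) (hc : εH ∘ₗ f = εC) :
    (TensorProduct.lid k C).toLinearMap ∘ₗ rTensor C εH ∘ₗ lcoactA f (𝒮 ∘ₗ f) =
      LinearMap.id := by
  have h : (TensorProduct.lid k C).toLinearMap ∘ₗ rTensor C εH ∘ₗ Qmap =
      ((TensorProduct.lid k C).toLinearMap ∘ₗ lTensor k (TensorProduct.rid k C).toLinearMap) ∘ₗ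
        TensorProduct.map εH (TensorProduct.map LinearMap.id εH) := by
    ext a x b; simp [mul_smul]
  rw [lcoactA_eq, ← LinearMap.comp_assoc, ← LinearMap.comp_assoc]
  rw [LinearMap.comp_assoc _ (rTensor C εH), h, LinearMap.comp_assoc, map_st, map_st, hc,
    st_counit_left, LinearMap.id_comp, st_counit_right]
  ext; simp

/-- The five-fold rearrangement occurring in coassociativity. -/
theorem coassoc_part (f : C →ₗ[k] H) (hm : Δ ∘ₗ f = st f f) :
    lTensor H (lcoactA f (𝒮 ∘ₗ f)) ∘ₗ lcoactA f (𝒮 ∘ₗ f) =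
      (TensorProduct.assoc k H H C).toLinearMap ∘ₗ rTensor C Δ ∘ₗ lcoactA f (𝒮 ∘ₗ f) := by
  rw [lcoactA_eq]
  have hL : lTensor H (Qmap ∘ₗ st f (st LinearMap.id f)) ∘ₗ Qmap ∘ₗ st f (st LinearMap.id f) =
      (lTensor H Qmap ∘ₗ Qmap) ∘ₗ st f (st (st f (st LinearMap.id f)) f) := by
    rw [LinearMap.lTensor_comp]
    change lTensor H Qmap ∘ₗ (lTensor H (st f (st LinearMap.id f)) ∘ₗ Qmap) ∘ₗ _ = _
    rw [Qmap_nat]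
    simp only [LinearMap.comp_assoc]
    rw [← st_comp_right, ← st_comp_left, LinearMap.comp_id]
  have hR : (TensorProduct.assoc k H H C).toLinearMap ∘ₗ rTensor C Δ ∘ₗ Qmap =
      ((TensorProduct.assoc k H H C).toLinearMap ∘ₗ
        rTensor C (LinearMap.mul' k (H ⊗[k] H) ∘ₗ
          rTensor _ (TensorProduct.map 𝒮 𝒮 ∘ₗ (TensorProduct.comm k H H).toLinearMap) ∘ₗ
          (TensorProduct.comm k _ _).toLinearMap) ∘ₗ
        (TensorProduct.assoc k (H ⊗[k] H) (H ⊗[k] H) C).symm.toLinearMap ∘ₗ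
        lTensor (H ⊗[k] H) (TensorProduct.comm k C (H ⊗[k] H)).toLinearMap) ∘ₗ
      TensorProduct.map Δ (TensorProduct.map LinearMap.id Δ) := by
    ext a x b
    have := LinearMap.congr_fun (comul_antipode' (k := k) (H := H)) b
    simp only [LinearMap.comp_apply] at this
    simp [Bialgebra.comul_mul, this]
  rw [hL]
  change _ = ((TensorProduct.assoc k H H C).toLinearMap ∘ₗ rTensor C Δ ∘ₗ Qmap) ∘ₗ _
  rw [hR, LinearMap.comp_assoc, LinearMap.comp_assoc _ (TensorProduct.map _ _), map_st, map_st, hm,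
    LinearMap.id_comp]
  rw [st_st f f, st_st f (st _ _) f, st_st _ f f]
  simp only [st_comp_right]
  simp only [← LinearMap.comp_assoc]
  congr 1
  ext a b c d e
  simp

/-- Compatibility of `st` with the action. -/
theorem st_act (γ : C ⊗[k] H →ₗ[k] C)
    (hγ_comul : ΔC ∘ₗ γ = TensorProduct.map γ γ ∘ₗ
      (tensorTensorTensorComm k C C H H).toLinearMap ∘ₗ TensorProduct.map ΔC Δ)
    (P : C →ₗ[k] X) (Q : C →ₗ[k] Y) (P2 : H →ₗ[k] X2) (Q2 : H →ₗ[k] Y2)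
    (p : X ⊗[k] X2 →ₗ[k] Z) {Z2 : Type*} [AddCommMonoid Z2] [Module k Z2]
    (q : Y ⊗[k] Y2 →ₗ[k] Z2) (P1 : C →ₗ[k] Z) (Q1 : C →ₗ[k] Z2)
    (hp : P1 ∘ₗ γ = p ∘ₗ TensorProduct.map P P2) (hq : Q1 ∘ₗ γ = q ∘ₗ TensorProduct.map Q Q2) :
    st P1 Q1 ∘ₗ γ = TensorProduct.map p q ∘ₗ
      (tensorTensorTensorComm k X Y X2 Y2).toLinearMap ∘ₗ
      TensorProduct.map (st P Q) (st P2 Q2) := by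
  rw [st, LinearMap.comp_assoc, hγ_comul, ← LinearMap.comp_assoc, ← TensorProduct.map_comp, hp, hq,
    TensorProduct.map_comp, st, st, TensorProduct.map_comp, LinearMap.comp_assoc]
  congr 1
  simp only [← LinearMap.comp_assoc]
  congr 1
  ext a b c d
  simp

theorem ayd_part (γ : C ⊗[k] H →ₗ[k] C)
    (hγ_comul : ΔC ∘ₗ γ = TensorProduct.map γ γ ∘ₗ
      (tensorTensorTensorComm k C C H H).toLinearMap ∘ₗ TensorProduct.map ΔC Δ)
    (f : C →ₗ[k] H) (hf_mod : f ∘ₗ γ = mulH ∘ₗ rTensor H f) :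
    lcoactA f (𝒮 ∘ₗ f) ∘ₗ γ = aydRLRhs mulH Δ 𝒮 γ (lcoactA f (𝒮 ∘ₗ f)) := by
  have hid : (LinearMap.id : C →ₗ[k] C) ∘ₗ γ =
      γ ∘ₗ TensorProduct.map LinearMap.id LinearMap.id := by simp
  have h1 := st_act γ hγ_comul _ _ _ _ _ _ _ _ hid hf_mod
  rw [← LinearMap.comp_assoc] at h1
  have h2 := st_act γ hγ_comul _ _ _ _ _ _ _ _ hf_mod h1
  rw [lcoactA_eq, LinearMap.comp_assoc, h2, aydRLRhs]
  have e : (lTensor H Δ ∘ₗ Δ : H →ₗ[k] _) =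
      st LinearMap.id (st (LinearMap.id : H →ₗ[k] H) (LinearMap.id : H →ₗ[k] H)) := by
    rw [st_id_id]; rfl
  have e2 : TensorProduct.map (Qmap ∘ₗ st f (st LinearMap.id f)) (lTensor H Δ ∘ₗ Δ) =
    rTensor _ Qmap ∘ₗ TensorProduct.map (st f (st LinearMap.id f))
      (st LinearMap.id (st (LinearMap.id : H →ₗ[k] H) (LinearMap.id : H →ₗ[k] H))) := by
    rw [e, LinearMap.rTensor_def, ← TensorProduct.map_comp]; rfl
  rw [e2]
  simp only [← LinearMap.comp_assoc]
  congr 1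
  ext a b c x y z
  simp [HopfAlgebra.antipode_mul_antidistrib, mul_assoc]

theorem mkQ_act (γ : C ⊗[k] H →ₗ[k] C) : (modIdeal γ).mkQ ∘ₗ γ =
    (TensorProduct.rid k _).toLinearMap ∘ₗ TensorProduct.map (modIdeal γ).mkQ εH := by
  ext c h
  have : γ (c ⊗ₜ[k] h) - εH h • c ∈ modIdeal γ := Submodule.subset_span ⟨c, h, rfl⟩
  have := (Submodule.Quotient.eq _).2 this
  simpa using this

/-- `c ↦ c⑴ ⊗ π c⑵ - c⑵ ⊗ π c⑴`. -/
def Psi (γ : C ⊗[k] H →ₗ[k] C) : C →ₗ[k] C ⊗[k] (C ⧸ modIdeal γ) :=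
  st LinearMap.id (modIdeal γ).mkQ -
    (TensorProduct.comm k _ _).toLinearMap ∘ₗ st (modIdeal γ).mkQ LinearMap.id

theorem sep_right {X Y : Type*} [AddCommGroup X] [Module k X] [AddCommGroup Y] [Module k Y]
    (t : X ⊗[k] Y)
    (h : ∀ φ : Y →ₗ[k] k, TensorProduct.rid k X (lTensor X φ t) = 0) : t = 0 := by
  let b := Module.Free.chooseBasis k Y
  have hb : TensorProduct.equivFinsuppOfBasisRight (M := X) b t = 0 := by
    ext i
    have := h (b.coord i)
    rw [TensorProduct.equivFinsuppOfBasisRight_apply]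
    simpa using this
  simpa using hb

theorem cdSub_eq (γ : C ⊗[k] H →ₗ[k] C) : cdSub γ = LinearMap.ker (Psi γ) := by
  ext c
  have key : ∀ φ : (C ⧸ modIdeal γ) →ₗ[k] k,
      ((TensorProduct.rid k C).toLinearMap ∘ₗ lTensor C (φ ∘ₗ (modIdeal γ).mkQ) ∘ₗ ΔC -
        (TensorProduct.lid k C).toLinearMap ∘ₗ rTensor C (φ ∘ₗ (modIdeal γ).mkQ) ∘ₗ ΔC) =
      (TensorProduct.rid k C).toLinearMap ∘ₗ lTensor C φ ∘ₗ Psi γ := by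
    intro φ
    rw [Psi, LinearMap.comp_sub, LinearMap.comp_sub]
    congr 1 <;>
    (unfold st
     simp only [← LinearMap.comp_assoc]
     congr 1
     ext a b
     simp)
  simp only [cdSub, Submodule.mem_iInf, key, LinearMap.mem_ker, LinearMap.comp_apply]
  constructor
  · intro h; exact sep_right _ h
  · intro h φ; simp [h]

theorem act_part (γ : C ⊗[k] H →ₗ[k] C)
    (hγ_comul : ΔC ∘ₗ γ = TensorProduct.map γ γ ∘ₗ
      (tensorTensorTensorComm k C C H H).toLinearMap ∘ₗ TensorProduct.map ΔC Δ) :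
    Psi γ ∘ₗ γ = rTensor _ γ ∘ₗ (TensorProduct.assoc k _ _ _).symm.toLinearMap ∘ₗ
      lTensor C (TensorProduct.comm k _ _).toLinearMap ∘ₗ
      (TensorProduct.assoc k _ _ _).toLinearMap ∘ₗ rTensor H (Psi γ) := by
  have hid : (LinearMap.id : C →ₗ[k] C) ∘ₗ γ =
      γ ∘ₗ TensorProduct.map LinearMap.id LinearMap.id := by simp
  have h1 := st_act γ hγ_comul _ _ _ _ _ _ _ _ hid (mkQ_act γ)
  have h2 := st_act γ hγ_comul _ _ _ _ _ _ _ _ (mkQ_act γ) hid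
  rw [st_counit_right] at h1
  rw [st_counit_left] at h2
  rw [Psi, LinearMap.sub_comp, LinearMap.comp_assoc, h1, h2, LinearMap.rTensor_sub]
  simp only [LinearMap.comp_sub]
  have m1 : ∀ (P : C →ₗ[k] C ⊗[k] (C ⧸ modIdeal γ)) (r : H →ₗ[k] H ⊗[k] k),
    TensorProduct.map P r = TensorProduct.map LinearMap.id r ∘ₗ rTensor H P := by
    intro P r; rw [LinearMap.rTensor_def, ← TensorProduct.map_comp]; rfl
  have m2 : ∀ (P : C →ₗ[k] (C ⧸ modIdeal γ) ⊗[k] C) (r : H →ₗ[k] k ⊗[k] H),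
    TensorProduct.map P r = TensorProduct.map LinearMap.id r ∘ₗ rTensor H P := by
    intro P r; rw [LinearMap.rTensor_def, ← TensorProduct.map_comp]; rfl
  rw [m1, m2, LinearMap.rTensor_comp]
  simp only [← LinearMap.comp_assoc]
  congr 2
  · ext a b c; simp
  · ext a b c; simp


theorem kappa_act (γ : C ⊗[k] H →ₗ[k] C)
    (hγ_comul : ΔC ∘ₗ γ = TensorProduct.map γ γ ∘ₗ
      (tensorTensorTensorComm k C C H H).toLinearMap ∘ₗ TensorProduct.map ΔC Δ)
    (f : C →ₗ[k] H) (hf_mod : f ∘ₗ γ = mulH ∘ₗ rTensor H f) :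
    (Qmap2 ∘ₗ st f (st (modIdeal γ).mkQ f)) ∘ₗ γ =
      (TensorProduct.rid k _).toLinearMap ∘ₗ
        TensorProduct.map (Qmap2 ∘ₗ st f (st (modIdeal γ).mkQ f)) εH := by
  have h1 := st_act γ hγ_comul _ _ _ _ _ _ _ _ (mkQ_act γ) hf_mod
  rw [← LinearMap.comp_assoc] at h1
  have h2 := st_act γ hγ_comul _ _ _ _ _ _ _ _ hf_mod h1
  rw [st_counit_left, st_comp_right, st_id_id] at h2
  rw [LinearMap.comp_assoc, h2]
  set B := st f (st (modIdeal γ).mkQ f)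
  have m1 : TensorProduct.map B (lTensor H (TensorProduct.lid k H).symm.toLinearMap ∘ₗ Δ) =
    TensorProduct.map LinearMap.id (lTensor H (TensorProduct.lid k H).symm.toLinearMap) ∘ₗ
      lTensor _ Δ ∘ₗ rTensor H B := by
    rw [LinearMap.lTensor_comp_rTensor, ← TensorProduct.map_comp]; rfl
  have m2 : (TensorProduct.rid k _).toLinearMap ∘ₗ TensorProduct.map (Qmap2 ∘ₗ B) εH =
      (Qmap2 ∘ₗ (TensorProduct.rid k _).toLinearMap ∘ₗ
        lTensor (H ⊗[k] ((C ⧸ modIdeal γ) ⊗[k] H)) εH) ∘ₗ rTensor H B := by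
    ext c h; simp
  rw [m1, m2]
  simp only [← LinearMap.comp_assoc]
  congr 1
  ext a d b h
  have hh := LinearMap.congr_fun (muR_comul (k := k) (H := H)) h
  simp only [LinearMap.comp_apply] at hh
  have gen : ∀ t : H ⊗[k] H,
    Qmap2 (TensorProduct.map mulH (TensorProduct.map (TensorProduct.rid k _).toLinearMap mulH ∘ₗ
      (tensorTensorTensorComm k (C ⧸ modIdeal γ) H k H).toLinearMap)
      (tensorTensorTensorComm k H ((C ⧸ modIdeal γ) ⊗[k] H) H (k ⊗[k] H)
        ((a ⊗ₜ (d ⊗ₜ b)) ⊗ₜ (lTensor H (TensorProduct.lid k H).symm.toLinearMap t)))) =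
      (a * muR t * 𝒮 b) ⊗ₜ[k] d := by
    intro t
    induction t with
    | zero => simp
    | add x y hx hy =>
      simp only [map_add, TensorProduct.tmul_add, hx, hy, mul_add, add_mul, TensorProduct.add_tmul]
    | tmul x y => simp [HopfAlgebra.antipode_mul_antidistrib, mul_assoc]
  have := gen (Δ h)
  rw [hh] at this
  rw [Algebra.linearMap_apply, Algebra.algebraMap_eq_smul_one, mul_smul_comm, mul_one,
    smul_mul_assoc, ← TensorProduct.smul_tmul'] at this
  simpa using this

/-- The induced coaction on `D`. -/
def kappaD (γ : C ⊗[k] H →ₗ[k] C) (f : C →ₗ[k] H)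
    (h : (Qmap2 ∘ₗ st f (st (modIdeal γ).mkQ f)) ∘ₗ γ =
      (TensorProduct.rid k _).toLinearMap ∘ₗ
        TensorProduct.map (Qmap2 ∘ₗ st f (st (modIdeal γ).mkQ f)) εH) :
    (C ⧸ modIdeal γ) →ₗ[k] H ⊗[k] (C ⧸ modIdeal γ) :=
  (modIdeal γ).liftQ (Qmap2 ∘ₗ st f (st (modIdeal γ).mkQ f)) (by
    rw [modIdeal, Submodule.span_le]
    rintro _ ⟨c, x, rfl⟩
    have := LinearMap.congr_fun h (c ⊗ₜ x)
    simp only [LinearMap.comp_apply, TensorProduct.map_tmul, LinearEquiv.coe_coe,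
      TensorProduct.rid_tmul] at this
    simp only [SetLike.mem_coe, LinearMap.mem_ker, map_sub, map_smul, LinearMap.comp_apply]
    rw [sub_eq_zero]
    exact this)

theorem kappaD_mkQ (γ : C ⊗[k] H →ₗ[k] C) (f : C →ₗ[k] H) (h) :
    kappaD γ f h ∘ₗ (modIdeal γ).mkQ = Qmap2 ∘ₗ st f (st (modIdeal γ).mkQ f) :=
  Submodule.liftQ_mkQ _ _ _

/-- `(a ⊗ (c ⊗ b)) ⊗ (y ⊗ d) ↦ S b * y * a ⊗ (c ⊗ d)`. -/
def Nmap : (H ⊗[k] (X ⊗[k] H)) ⊗[k] (H ⊗[k] Y) →ₗ[k] H ⊗[k] (X ⊗[k] Y) :=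
  (TensorProduct.assoc k H X Y).toLinearMap ∘ₗ
  rTensor Y (Qmap ∘ₗ (TensorProduct.assoc k H X H).toLinearMap ∘ₗ
    (TensorProduct.comm k H (H ⊗[k] X)).toLinearMap ∘ₗ
    rTensor (H ⊗[k] X) LinearMap.id) ∘ₗ
  rTensor Y (lTensor H (rTensor X mulH) ∘ₗ
    lTensor H (TensorProduct.assoc k H H X).symm.toLinearMap ∘ₗ
    (TensorProduct.assoc k H H (H ⊗[k] X)).toLinearMap ∘ₗ
    (TensorProduct.comm k (H ⊗[k] X) (H ⊗[k] H)).toLinearMap ∘ₗ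
    rTensor (H ⊗[k] H) LinearMap.id ∘ₗ
    rTensor (H ⊗[k] H) LinearMap.id) ∘ₗ
  rTensor Y ((TensorProduct.assoc k (H ⊗[k] X) H H).toLinearMap ∘ₗ
    rTensor H (TensorProduct.assoc k H X H).symm.toLinearMap) ∘ₗ
  (TensorProduct.assoc k _ H Y).symm.toLinearMap

@[simp] theorem Nmap_tmul (a b y : H) (x : X) (d : Y) :
    Nmap (k := k) ((a ⊗ₜ (x ⊗ₜ b)) ⊗ₜ (y ⊗ₜ d)) = (𝒮 b * (y * a)) ⊗ₜ (x ⊗ₜ d) := by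
  simp [Nmap]

theorem cancel1 (f : C →ₗ[k] H) (hc : εH ∘ₗ f = εC) (hm : Δ ∘ₗ f = st f f) (p : C →ₗ[k] X) :
    Nmap ∘ₗ st (st f (st LinearMap.id f)) (Qmap2 ∘ₗ st f (st p f)) =
      Qmap ∘ₗ st f (st (st LinearMap.id p) f) := by
  have e : Nmap ∘ₗ st (st f (st LinearMap.id f)) (Qmap2 ∘ₗ st f (st p f)) =
      (rTensor (C ⊗[k] X) mulH ∘ₗ (TensorProduct.assoc k H H (C ⊗[k] X)).symm.toLinearMap ∘ₗ
        lTensor H (Qmap ∘ₗ lTensor H (TensorProduct.assoc k C X H).symm.toLinearMap) ∘ₗ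
        (TensorProduct.leftComm k H H (C ⊗[k] (X ⊗[k] H))).toLinearMap ∘ₗ
        lTensor H (TensorProduct.leftComm k C H (X ⊗[k] H)).toLinearMap) ∘ₗ
        lTensor H (lTensor C (rTensor (X ⊗[k] H) muL ∘ₗ
          (TensorProduct.assoc k H H (X ⊗[k] H)).symm.toLinearMap)) ∘ₗ
        st f (st LinearMap.id (st f (st f (st p f)))) := by
    rw [st_comp_right, st_st f (st LinearMap.id f), st_st LinearMap.id f, st_comp_right]
    simp only [← LinearMap.comp_assoc]
    congr 1
    ext a c m n x b
    simp [mul_assoc]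
  rw [e, ← st_comp_right, ← st_comp_right, cancelL f hc hm, st_comp_right, st_comp_right,
    st_st LinearMap.id p f, st_comp_right]
  simp only [← LinearMap.comp_assoc]
  congr 1
  ext a c x b
  simp

theorem cancel2 (f : C →ₗ[k] H) (hc : εH ∘ₗ f = εC) (hm : Δ ∘ₗ f = st f f) (p : C →ₗ[k] X) :
    Nmap ∘ₗ (TensorProduct.comm k _ _).toLinearMap ∘ₗ
        st (Qmap2 ∘ₗ st f (st p f)) (st f (st LinearMap.id f)) =
      lTensor H (TensorProduct.comm k X C).toLinearMap ∘ₗ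
        Qmap ∘ₗ st f (st (st p LinearMap.id) f) := by
  have e : Nmap ∘ₗ (TensorProduct.comm k _ _).toLinearMap ∘ₗ
        st (Qmap2 ∘ₗ st f (st p f)) (st f (st LinearMap.id f)) =
      (lTensor H (TensorProduct.comm k X C).toLinearMap ∘ₗ Qmap ∘ₗ
        rTensor ((X ⊗[k] C) ⊗[k] H) mulH ∘ₗ
        (TensorProduct.assoc k H H ((X ⊗[k] C) ⊗[k] H)).symm.toLinearMap ∘ₗ
        lTensor H (lTensor H (TensorProduct.assoc k X C H).symm.toLinearMap ∘ₗ
          (TensorProduct.leftComm k X H (C ⊗[k] H)).toLinearMap)) ∘ₗ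
        lTensor H (lTensor X (rTensor (C ⊗[k] H) muL ∘ₗ
          (TensorProduct.assoc k H H (C ⊗[k] H)).symm.toLinearMap)) ∘ₗ
        st f (st p (st f (st f (st LinearMap.id f)))) := by
    rw [st_comp_left, st_st f (st p f), st_st p f, st_comp_right]
    simp only [← LinearMap.comp_assoc]
    congr 1
    ext a x m n c b
    simp [mul_assoc]
  rw [e, ← st_comp_right, ← st_comp_right, cancelL f hc hm, st_comp_right, st_comp_right,
    st_st p LinearMap.id f, st_comp_right]
  simp only [← LinearMap.comp_assoc]
  congr 1
  ext a x c b
  simp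

theorem psi_part (γ : C ⊗[k] H →ₗ[k] C)
    (hγ_comul : ΔC ∘ₗ γ = TensorProduct.map γ γ ∘ₗ
      (tensorTensorTensorComm k C C H H).toLinearMap ∘ₗ TensorProduct.map ΔC Δ)
    (f : C →ₗ[k] H) (hc : εH ∘ₗ f = εC) (hm : Δ ∘ₗ f = st f f)
    (hf_mod : f ∘ₗ γ = mulH ∘ₗ rTensor H f) :
    ∃ L : C ⊗[k] (C ⧸ modIdeal γ) →ₗ[k] H ⊗[k] (C ⊗[k] (C ⧸ modIdeal γ)),
      lTensor H (Psi γ) ∘ₗ lcoactA f (𝒮 ∘ₗ f) = L ∘ₗ Psi γ := by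
  have hk := kappa_act γ hγ_comul f hf_mod
  refine ⟨Nmap ∘ₗ TensorProduct.map (st f (st LinearMap.id f)) (kappaD γ f hk), ?_⟩
  have gen : ∀ {W : Type _} [AddCommGroup W] [Module k W] (u : C →ₗ[k] W),
      lTensor H u ∘ₗ Qmap ∘ₗ st f (st LinearMap.id f) = Qmap ∘ₗ st f (st u f) := by
    intro W _ _ u
    rw [← LinearMap.comp_assoc, Qmap_nat, LinearMap.comp_assoc, ← st_comp_right, ← st_comp_left,
      LinearMap.comp_id]
  rw [lcoactA_eq, Psi, LinearMap.lTensor_sub, LinearMap.sub_comp, LinearMap.comp_sub,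
    LinearMap.lTensor_comp]
  congr 1
  · rw [gen, LinearMap.comp_assoc, map_st, kappaD_mkQ, LinearMap.comp_id, cancel1 f hc hm]
  · rw [LinearMap.comp_assoc, gen, ← cancel2 f hc hm, ← kappaD_mkQ γ f hk]
    have : st (kappaD γ f hk ∘ₗ (modIdeal γ).mkQ) (st f (st LinearMap.id f)) =
        TensorProduct.map (kappaD γ f hk) (st f (st LinearMap.id f)) ∘ₗ
          st (modIdeal γ).mkQ LinearMap.id := by rw [map_st, LinearMap.comp_id]
    rw [this]
    simp only [← LinearMap.comp_assoc]
    congr 1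
    ext a b
    simp

end Helpers

/-- For a total cointegral `f : C → H` which is a coalgebra map, `C^D` with
its original action and the left coaction `c ↦ f⁻¹ c⑶ * f c⑴ ⊗ c⑵` is a right-left
anti-Yetter-Drinfeld module over `H`; moreover if `c⑵ · (f⁻¹ c⑶ * f c⑴) = c` for all
`c ∈ C^D` then it is stable. -/
theorem total_cointegral_coalgebra_map_gives_AYD_on_CD
    (Sinv : H →ₗ[k] H) (hS₁ : Sinv ∘ₗ 𝒮 = LinearMap.id) (hS₂ : 𝒮 ∘ₗ Sinv = LinearMap.id)
    (γ : C ⊗[k] H →ₗ[k] C)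
    (hγ_assoc : γ ∘ₗ lTensor C mulH =
      γ ∘ₗ rTensor H γ ∘ₗ (TensorProduct.assoc k C H H).symm.toLinearMap)
    (hγ_one : ∀ c : C, γ (c ⊗ₜ[k] (1 : H)) = c)
    (hγ_comul : ΔC ∘ₗ γ = TensorProduct.map γ γ ∘ₗ
      (tensorTensorTensorComm k C C H H).toLinearMap ∘ₗ TensorProduct.map ΔC Δ)
    (hγ_counit : εC ∘ₗ γ = LinearMap.mul' k k ∘ₗ TensorProduct.map εC εH)
    (f : C →ₗ[k] H) (hf_counit : εH ∘ₗ f = εC)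
    (hf_mod : f ∘ₗ γ = mulH ∘ₗ rTensor H f)
    (hf_comul : Δ ∘ₗ f = TensorProduct.map f f ∘ₗ ΔC)
 :
    (∀ c ∈ cdSub γ, ∀ h : H, γ (c ⊗ₜ[k] h) ∈ cdSub γ) ∧
    (∀ c ∈ cdSub γ, lcoactA f (𝒮 ∘ₗ f) c ∈ LinearMap.range (lTensor H (cdSub γ).subtype)) ∧
    (∀ c ∈ cdSub γ,
      lTensor H (lcoactA f (𝒮 ∘ₗ f)) (lcoactA f (𝒮 ∘ₗ f) c) =
        (TensorProduct.assoc k H H C) (rTensor C Δ (lcoactA f (𝒮 ∘ₗ f) c))) ∧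
    (∀ c ∈ cdSub γ,
      (TensorProduct.lid k C) (rTensor C εH (lcoactA f (𝒮 ∘ₗ f) c)) = c) ∧
    (∀ c ∈ cdSub γ, ∀ h : H,
      lcoactA f (𝒮 ∘ₗ f) (γ (c ⊗ₜ[k] h)) =
        aydRLRhs mulH Δ 𝒮 γ (lcoactA f (𝒮 ∘ₗ f)) (c ⊗ₜ[k] h)) ∧
    ((∀ c ∈ cdSub γ, γ ((TensorProduct.comm k H C) (lcoactA f (𝒮 ∘ₗ f) c)) = c) →
      ∀ c ∈ cdSub γ, γ ((TensorProduct.comm k H C) (lcoactA f (𝒮 ∘ₗ f) c)) = c) := by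
  have hm : Δ ∘ₗ f = st f f := hf_comul
  refine ⟨?_, ?_, ?_, ?_, ?_, fun h => h⟩
  · rw [cdSub_eq]
    intro c hc h
    have h1 := LinearMap.congr_fun (act_part γ hγ_comul) (c ⊗ₜ h)
    rw [LinearMap.mem_ker] at hc ⊢
    simpa [hc] using h1
  · rw [cdSub_eq]
    intro c hc
    obtain ⟨L, hL⟩ := psi_part γ hγ_comul f hf_counit hm hf_mod
    have h1 := LinearMap.congr_fun hL c
    rw [LinearMap.mem_ker] at hc
    simp only [LinearMap.comp_apply, hc, map_zero] at h1
    have hex : Function.Exact (LinearMap.ker (Psi γ)).subtype (Psi γ) :=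
      LinearMap.exact_subtype_ker_map (Psi γ)
    exact (Module.Flat.lTensor_exact H hex _).1 h1
  · intro c _
    exact LinearMap.congr_fun (coassoc_part f hm) c
  · intro c _
    exact LinearMap.congr_fun (counit_part f hf_counit) c
  · intro c _ h
    exact LinearMap.congr_fun (ayd_part γ hγ_comul f hf_mod) (c ⊗ₜ h)
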